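/- Let x_1,…,x_N ∈ ℝⁿ, let C ⊆ {1,…,N}, let θ* ∈ ℝⁿ, and set y_k = x_kᵀθ* for all k ∈ C. Let θ_i, θ_j ∈ ℝⁿ with θ_i ≠ θ_j, and define A_i = {k ∈ C : y_k = x_kᵀθ_i} and A_j = {k ∈ C : y_k = x_kᵀθ_j}. Then the Gram matrices ∑_{k∈A_i} x_k x_kᵀ and ∑_{k∈A_j} x_k x_kᵀ are not both invertible. -/

import Mathlib

/-!
A parameter `θ` fitting every output indexed by `A` satisfies `x_kᵀ (θ - θ*) = 0` for `k ∈ A`, so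
`θ - θ*` lies in the kernel of the Gram matrix of `A`. If that matrix is invertible, `θ = θ*`
(`eq_of_isUnit_gram`). Were both Gram matrices invertible, both `θ_i` and `θ_j` would equal `θ*`.
-/

open Matrix Finset

theorem eq_of_isUnit_gram {n N : ℕ} (x : Fin N → Fin n → ℝ) (A : Finset (Fin N))
    (θ θ' : Fin n → ℝ) (h : ∀ k ∈ A, x k ⬝ᵥ θ = x k ⬝ᵥ θ')
    (hA : IsUnit (∑ k ∈ A, vecMulVec (x k) (x k))) : θ = θ' := by
  apply Matrix.mulVec_injective_of_isUnit hA
  simp only [Matrix.sum_mulVec, Matrix.vecMulVec_mulVec]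
  exact Finset.sum_congr rfl fun k hk => by rw [h k hk]

/-- If the outputs over `C` are generated by a single parameter `θ*` and `θ_i ≠ θ_j`, then
the index sets of `C` exactly fitted by `θ_i` and by `θ_j` cannot both have invertible
Gram matrices. -/
theorem stmt_12 {n N : ℕ} (x : Fin N → Fin n → ℝ) (C : Finset (Fin N))
    (θstar : Fin n → ℝ) (y : Fin N → ℝ) (hy : ∀ k ∈ C, y k = x k ⬝ᵥ θstar)
    (θi θj : Fin n → ℝ) (hij : θi ≠ θj)
    (Ai Aj : Finset (Fin N))
    (hAi : ∀ k, k ∈ Ai ↔ k ∈ C ∧ y k = x k ⬝ᵥ θi)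
    (hAj : ∀ k, k ∈ Aj ↔ k ∈ C ∧ y k = x k ⬝ᵥ θj) :
    ¬(IsUnit (∑ k ∈ Ai, vecMulVec (x k) (x k)) ∧
      IsUnit (∑ k ∈ Aj, vecMulVec (x k) (x k))) := by
  rintro ⟨hi, hj⟩
  apply hij
  have ei : θi = θstar := eq_of_isUnit_gram x Ai θi θstar
    (fun k hk => by
      obtain ⟨hC, h⟩ := (hAi k).1 hk
      rw [← h, hy k hC]) hi
  have ej : θj = θstar := eq_of_isUnit_gram x Aj θj θstar
    (fun k hk => by
      obtain ⟨hC, h⟩ := (hAj k).1 hk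
      rw [← h, hy k hC]) hj
  rw [ei, ej]
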